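/- arXiv:2103.13307 — 3 statements merged into one kernel-verified Lean document; each statement's English description precedes it below -/
import Mathlib

section
/- For every real number y ≠ 0 such that y+n ≠ 0 for all natural numbers n, and every real t with 0 ≤ t < 1, one has ∑_{n=0}^∞ (y+n)^{n-1} · (t·e^{-t})^n / n! = e^{y·t} / y. -/
/-!
Put `a n = (y + n)^(n-1) / n!`, so that the series is `∑ a n * x^n` at `x = t * exp (-t)`.

*Near `t = 0`.* Expanding `exp (-n t)` turns the series into an absolutely convergent double series
in powers of `t`. The coefficient of `t^N` is evaluated by Abel's identity
`∑_{n+m=N} a n * (-n)^m / m! = y^N / (y * N!)` (`abel_sum`). To see it, write `-n = y - (y + n)` and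
expand: after regrouping, the factor of `y^k / k!` is a finite difference of order `N - k` of a
polynomial of degree `N - k - 1`, so only `k = N` contributes (`kolberg_inner_sum`).
Summing over `N` gives `exp (y t) / y`.

*On `[0, 1)`.* Since `u^n / n! ≤ exp u`, the coefficients satisfy `|a n| ≤ C * e^n`
(`abs_coeff_le`), hence `x ↦ ∑ a n * x^n` is analytic for `|x| < 1/e`. As `t * exp (-t) < 1/e` for
`t < 1`, both sides are analytic in `t` on `[0, 1)`, and the identity theorem concludes.
-/

open Finset Finset.HasAntidiagonal

/-- The `n`-th coefficient `(y + n)^(n-1) / n!` of the series; at `n = 0` it is `y⁻¹`. -/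
noncomputable def kolbergCoeff (y : ℝ) (n : ℕ) : ℝ :=
  (y + n) ^ ((n : ℤ) - 1) / (Nat.factorial n : ℝ)

/-- For `M > 0` this is, up to the factor `1 / M!`, the `M`-th finite difference of
`x ↦ x^(M-1)` at `y`. -/
lemma kolberg_inner_sum (y : ℝ) (hyn : ∀ n : ℕ, y + (n : ℝ) ≠ 0) (M : ℕ) :
    ∑ q ∈ antidiagonal M,
      kolbergCoeff y q.1 * ((-(y + q.1)) ^ q.2 / (Nat.factorial q.2 : ℝ))
      = if M = 0 then y⁻¹ else 0 := by
  rcases M with _ | M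
  · simp [kolbergCoeff]
  · have h := congrFun (fwdDiff_iter_pow_eq_zero_of_lt (R := ℝ) (Nat.lt_succ_self M)) y
    rw [fwdDiff_iter_eq_sum_shift] at h
    rw [Finset.Nat.sum_antidiagonal_eq_sum_range_succ_mk]
    simp only [Nat.succ_eq_add_one, Pi.zero_apply] at h
    have h2 := congrArg (fun x : ℝ => x / ((M + 1).factorial : ℝ)) h
    simp only [zero_div] at h2
    rw [if_neg (Nat.succ_ne_zero M), ← h2, Finset.sum_div]
    refine Finset.sum_congr rfl fun n hn => ?_
    have hn' : n ≤ M + 1 := Nat.lt_succ_iff.1 (Finset.mem_range.1 hn)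
    have hz := hyn n
    have hp : (y + n) ^ n * (y + n) ^ (M + 1 - n) = (y + n) ^ M * (y + (n : ℝ)) := by
      rw [← pow_add, ← pow_succ]; congr 1; omega
    have hc : ((M + 1).choose n : ℝ) = (M + 1).factorial / (n.factorial * (M + 1 - n).factorial) :=
      Nat.cast_choose ℝ hn'
    have h1 : ((M + 1).factorial : ℝ) ≠ 0 := by positivity
    have h3 : (n.factorial : ℝ) ≠ 0 := by positivity
    have h4 : ((M + 1 - n).factorial : ℝ) ≠ 0 := by positivity
    simp only [kolbergCoeff, zsmul_eq_mul, nsmul_eq_mul, mul_one]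
    push_cast
    rw [hc, zpow_sub_one₀ hz, zpow_natCast, neg_pow]
    field_simp
    linear_combination hp

/-- Abel's identity, giving the coefficient of `t^N` in the double series. -/
lemma abel_sum (y : ℝ) (hyn : ∀ n : ℕ, y + (n : ℝ) ≠ 0) (N : ℕ) :
    ∑ p ∈ antidiagonal N, kolbergCoeff y p.1 * ((-(p.1 : ℝ)) ^ p.2 / (Nat.factorial p.2 : ℝ))
      = y ^ N / (Nat.factorial N : ℝ) * y⁻¹ := by
  have hexp : ∀ (u v : ℝ) (m : ℕ), (u + v) ^ m / (m.factorial : ℝ)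
      = ∑ q ∈ antidiagonal m, u ^ q.1 / (q.1.factorial : ℝ) * (v ^ q.2 / (q.2.factorial : ℝ)) := by
    intro u v m
    rw [(Commute.all u v).add_pow', Finset.sum_div]
    refine Finset.sum_congr rfl fun q hq => ?_
    have hq' := mem_antidiagonal.1 hq
    subst hq'
    rw [nsmul_eq_mul, Nat.cast_add_choose]
    have h1 : ((q.1 + q.2).factorial : ℝ) ≠ 0 := by positivity
    field_simp
  calc _ = ∑ p ∈ antidiagonal N, ∑ q ∈ antidiagonal p.2, y ^ q.1 / (q.1.factorial : ℝ) *
        (kolbergCoeff y p.1 * ((-(y + p.1)) ^ q.2 / (q.2.factorial : ℝ))) := by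
        refine Finset.sum_congr rfl fun p _ => ?_
        have : (-(p.1 : ℝ)) = y + (-(y + p.1)) := by ring
        rw [this, hexp, Finset.mul_sum]
        refine Finset.sum_congr rfl fun q _ => ?_
        ring
    _ = ∑ p ∈ antidiagonal N, ∑ q ∈ antidiagonal p.2, y ^ p.1 / (p.1.factorial : ℝ) *
        (kolbergCoeff y q.1 * ((-(y + q.1)) ^ q.2 / (q.2.factorial : ℝ))) := by
        rw [Finset.sum_sigma', Finset.sum_sigma']
        refine Finset.sum_nbij' (fun s => ⟨(s.2.1, s.1.1 + s.2.2), (s.1.1, s.2.2)⟩)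
          (fun s => ⟨(s.2.1, s.1.1 + s.2.2), (s.1.1, s.2.2)⟩) ?_ ?_ ?_ ?_ ?_
        · rintro ⟨⟨a, b⟩, ⟨c, d⟩⟩ h
          simp only [mem_sigma, HasAntidiagonal.mem_antidiagonal] at h ⊢
          exact ⟨by omega, trivial⟩
        · rintro ⟨⟨a, b⟩, ⟨c, d⟩⟩ h
          simp only [mem_sigma, HasAntidiagonal.mem_antidiagonal] at h ⊢
          exact ⟨by omega, trivial⟩
        · rintro ⟨⟨a, b⟩, ⟨c, d⟩⟩ h
          simp only [mem_sigma, HasAntidiagonal.mem_antidiagonal] at h ⊢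
          obtain ⟨_, rfl⟩ := h
          rfl
        · rintro ⟨⟨a, b⟩, ⟨c, d⟩⟩ h
          simp only [mem_sigma, HasAntidiagonal.mem_antidiagonal] at h ⊢
          obtain ⟨_, rfl⟩ := h
          rfl
        · intro s _
          rfl
    _ = _ := by
        simp only [← Finset.mul_sum, kolberg_inner_sum y hyn]
        rw [Finset.sum_eq_single (N, 0)]
        · simp
        · rintro ⟨a, b⟩ h hne
          have hb : b ≠ 0 := by
            rintro rfl
            exact hne (by simpa using h)
          simp [hb]
        · simp

lemma abs_coeff_le (y : ℝ) (n : ℕ) :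
    |kolbergCoeff y n| ≤ (Real.exp |y| + |y|⁻¹) * Real.exp 1 ^ n := by
  rcases n with _ | n
  · simp [kolbergCoeff]
    positivity
  · have h1 : |y + ((n + 1 : ℕ) : ℝ)| ≤ |y| + ((n + 1 : ℕ) : ℝ) := by
      refine (abs_add_le _ _).trans_eq ?_
      rw [Nat.abs_cast]
    have h2 : (1 : ℝ) ≤ |y| + ((n + 1 : ℕ) : ℝ) := by
      have := abs_nonneg y
      push_cast
      have : (0 : ℝ) ≤ n := by positivity
      linarith
    have h3 : (((n + 1 : ℕ) : ℤ) - 1) = (n : ℤ) := by push_cast; ring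
    rw [kolbergCoeff, h3, zpow_natCast, abs_div, abs_pow, Nat.abs_cast]
    calc |y + ((n + 1 : ℕ) : ℝ)| ^ n / ((n + 1).factorial : ℝ)
        ≤ (|y| + ((n + 1 : ℕ) : ℝ)) ^ (n + 1) / ((n + 1).factorial : ℝ) := by
          gcongr
          exact (pow_le_pow_left₀ (abs_nonneg _) h1 n).trans
            (pow_le_pow_right₀ h2 (Nat.le_succ n))
      _ ≤ Real.exp (|y| + ((n + 1 : ℕ) : ℝ)) :=
          Real.pow_div_factorial_le_exp _ (by linarith) _
      _ = Real.exp |y| * Real.exp 1 ^ (n + 1) := by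
          rw [Real.exp_add, ← Real.exp_nat_mul, mul_one]
      _ ≤ _ := by
          gcongr
          have : 0 ≤ |y|⁻¹ := by positivity
          linarith

lemma analyticAt_series (y : ℝ) (x : ℝ)
    (hx : |x| < Real.exp (-1)) :
    AnalyticAt ℝ (fun x : ℝ => ∑' n : ℕ, kolbergCoeff y n * x ^ n) x := by
  set p := FormalMultilinearSeries.ofScalars ℝ (kolbergCoeff y) with hp
  have hr : ((NNReal.mk (Real.exp (-1)) (Real.exp_pos _).le : NNReal) : ENNReal) ≤ p.radius := by
    refine p.le_radius_of_bound (Real.exp |y| + |y|⁻¹) fun n => ?_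
    rw [hp, FormalMultilinearSeries.ofScalars_norm, Real.norm_eq_abs]
    calc |kolbergCoeff y n| * Real.exp (-1) ^ n
        ≤ ((Real.exp |y| + |y|⁻¹) * Real.exp 1 ^ n) * Real.exp (-1) ^ n := by
          gcongr
          exact abs_coeff_le y n
      _ = Real.exp |y| + |y|⁻¹ := by
          rw [mul_assoc, ← mul_pow, ← Real.exp_add]; simp
  have hpos : 0 < p.radius := lt_of_lt_of_le (by
    rw [ENNReal.coe_pos, ← NNReal.coe_pos]; exact Real.exp_pos _) hr
  have hs : p.sum = fun x : ℝ => ∑' n : ℕ, kolbergCoeff y n * x ^ n := by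
    funext x
    have := FormalMultilinearSeries.ofScalars_sum_eq (kolbergCoeff y) x
    simpa [FormalMultilinearSeries.ofScalarsSum] using this
  rw [← hs]
  refine (p.hasFPowerSeriesOnBall hpos).analyticAt_of_mem ?_
  refine Metric.eball_subset_eball hr ?_
  rw [Metric.eball_coe]
  simpa using hx

/-- The identity near `t = 0`, by rearranging the double series. -/
lemma local_identity (y : ℝ) (hyn : ∀ n : ℕ, y + (n : ℝ) ≠ 0) (t : ℝ) (ht : |t| < 1 / 10) :
    ∑' n : ℕ, kolbergCoeff y n * (t * Real.exp (-t)) ^ n = Real.exp (y * t) / y := by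
  have hE : ∀ x : ℝ, HasSum (fun k : ℕ => x ^ k / (k.factorial : ℝ)) (Real.exp x) := by
    intro x
    rw [Real.exp_eq_exp_ℝ]
    exact NormedSpace.expSeries_div_hasSum_exp x
  set F : ℕ × ℕ → ℝ := fun p =>
    kolbergCoeff y p.1 * t ^ p.1 * ((-(p.1 * t)) ^ p.2 / (p.2.factorial : ℝ)) with hF
  have hq : Real.exp 1 * (|t| * Real.exp |t|) < 1 := by
    have h1 : Real.exp |t| ≤ Real.exp 1 := Real.exp_le_exp.2 (by linarith)
    have h2 := Real.exp_one_lt_d9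
    have h3 := Real.exp_pos 1
    have h4 : |t| * Real.exp |t| ≤ 1 / 10 * Real.exp 1 :=
      mul_le_mul ht.le h1 (Real.exp_pos _).le (by norm_num)
    nlinarith
  have hnorm : ∀ n k : ℕ, ‖F (n, k)‖
      = |kolbergCoeff y n| * |t| ^ n * ((n * |t|) ^ k / (k.factorial : ℝ)) := by
    intro n k
    simp [hF]
  have hsum : Summable F := by
    refine Summable.of_norm ?_
    rw [summable_prod_of_nonneg (fun _ => norm_nonneg _)]
    constructor
    · intro n
      simp_rw [hnorm]
      exact (hE _).summable.mul_left _
    · simp_rw [hnorm]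
      have : ∀ n : ℕ, ∑' k : ℕ, |kolbergCoeff y n| * |t| ^ n *
          ((n * |t|) ^ k / (k.factorial : ℝ))
          = |kolbergCoeff y n| * (|t| * Real.exp |t|) ^ n := by
        intro n
        rw [((hE _).mul_left _).tsum_eq, mul_pow, ← Real.exp_nat_mul, mul_assoc]
      simp_rw [this]
      refine Summable.of_nonneg_of_le (fun n => by positivity) (fun n => ?_)
        ((summable_geometric_of_lt_one (by positivity) hq).mul_left (Real.exp |y| + |y|⁻¹))
      rw [mul_pow (Real.exp 1), ← mul_assoc]
      gcongr
      exact abs_coeff_le y n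
  have hrow := hsum.hasSum.prod_fiberwise (g := fun n : ℕ =>
      kolbergCoeff y n * (t * Real.exp (-t)) ^ n) (fun n => by
    have h := (hE (-(n * t))).mul_left (kolbergCoeff y n * t ^ n)
    convert! h using 1
    rw [mul_pow, ← Real.exp_nat_mul, mul_neg, mul_assoc])
  have hdiag := ((sigmaAntidiagonalEquivProd (A := ℕ)).hasSum_iff.2
      hsum.hasSum).sigma (g := fun N : ℕ => (y * t) ^ N / (N.factorial : ℝ) * y⁻¹) (fun N => by
    have h := hasSum_fintype (fun p : antidiagonal N => F p.1)
    convert! h using 1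
    rw [Finset.sum_coe_sort (antidiagonal N) F, mul_pow,
      show y ^ N * t ^ N / (N.factorial : ℝ) * y⁻¹
        = (y ^ N / (N.factorial : ℝ) * y⁻¹) * t ^ N by ring, ← abel_sum y hyn N, Finset.sum_mul]
    refine Finset.sum_congr rfl fun p hp => ?_
    rw [← mem_antidiagonal.1 hp, hF, pow_add]
    simp only
    rw [← neg_mul, mul_pow]
    ring)
  rw [hrow.tsum_eq, hdiag.unique ((hE (y * t)).mul_right y⁻¹), div_eq_mul_inv]

/-- The prototype identity: `∑_{n=0}^∞ (y+n)^{n-1} (t e^{-t})^n / n! = e^{yt}/y`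
for `0 ≤ t < 1` and `y` such that `y + n ≠ 0` for all naturals `n`. -/
theorem kolberg_prototype (y : ℝ) (hy : y ≠ 0) (hyn : ∀ n : ℕ, y + (n : ℝ) ≠ 0)
    (t : ℝ) (ht0 : 0 ≤ t) (ht1 : t < 1) :
    ∑' n : ℕ, (y + n) ^ ((n : ℤ) - 1) * (t * Real.exp (-t)) ^ n / (Nat.factorial n : ℝ)
      = Real.exp (y * t) / y := by
  have hbound : ∀ s ∈ Set.Ico (0 : ℝ) 1, |s * Real.exp (-s)| < Real.exp (-1) := by
    rintro s ⟨hs0, hs1⟩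
    rw [abs_of_nonneg (by positivity)]
    -- `s < exp (s - 1)` is the strict tangent-line inequality for `exp`.
    have h := Real.add_one_lt_exp (x := s - 1) (by linarith)
    calc s * Real.exp (-s) < Real.exp (s - 1) * Real.exp (-s) := by
          have := Real.exp_pos (-s)
          gcongr
          linarith
      _ = Real.exp (-1) := by rw [← Real.exp_add]; ring_nf
  have hL : AnalyticOnNhd ℝ
      (fun s : ℝ => ∑' n : ℕ, kolbergCoeff y n * (s * Real.exp (-s)) ^ n) (Set.Ico 0 1) := by
    intro s hs
    have hg : AnalyticAt ℝ (fun s : ℝ => s * Real.exp (-s)) s := by fun_prop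
    exact AnalyticAt.fun_comp (f := fun s : ℝ => s * Real.exp (-s))
      (analyticAt_series y _ (hbound s hs)) hg
  have hR : AnalyticOnNhd ℝ (fun s : ℝ => Real.exp (y * s) / y) (Set.Ico 0 1) := by
    intro s _
    simp only [div_eq_mul_inv]
    fun_prop
  have hnear : (fun s : ℝ => ∑' n : ℕ, kolbergCoeff y n * (s * Real.exp (-s)) ^ n)
      =ᶠ[nhds 0] fun s : ℝ => Real.exp (y * s) / y := by
    filter_upwards [Metric.ball_mem_nhds (0 : ℝ) (show (0 : ℝ) < 1 / 10 by norm_num)] with s hs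
    exact local_identity y hyn s (by simpa using hs)
  have key := hL.eqOn_of_preconnected_of_eventuallyEq hR isPreconnected_Ico
    (Set.left_mem_Ico.2 one_pos) hnear ⟨ht0, ht1⟩
  refine Eq.trans ?_ key
  refine tsum_congr fun n => ?_
  rw [kolbergCoeff]
  ring
end

section
/- For every integer k ≥ 1, the sum of the convergent series ∑_{n=1}^∞ n^{n-k} · e^{-n} / n! is a rational number. -/
/-!
Let `T(y) = ∑ n ^ (n - 1) y ^ n / n!` be the tree function. For `j ≥ 1`, writing `(n)_j` for the
falling factorial, `T ^ j = j ∑ (n)_j n ^ (n - j - 1) y ^ n / n!`. At the boundary point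
`y = exp (-1)` the value of `T` is `1`, so `∑ (n)_j n ^ (n - j - 1) exp (-n) / n! = 1 / j`
(`hasSum_fallingTerm_zero`). The recursion `(n)_(j + 1) = (n - j) (n)_j` then gives, by induction
on `i`, that `∑ (n)_j n ^ (n - j - 1 - i) exp (-n) / n!` is rational for all `i ≥ 0` and `j ≥ 1`
(`exists_hasSum_fallingTerm`); the theorem is the case `j = 1`, `i = k - 1`.

The boundary values are found without analytic continuation or an Abelian theorem. The series
`abelSum x = ∑ x (x + n) ^ (n - 1) exp (-n) / n!`, formally `exp (x T(exp (-1)))`, converges by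
Stirling's bound and is multiplicative in `x ≥ 0` by Abel's binomial identity (`abelCoeff_add`).
With `s = T(exp (-1))`, termwise comparison gives `abelSum x ≥ 1 + x s`, and `abelSum 1 = e s`.
Hence `e s = abelSum (1 / N) ^ N ≥ (1 + s / N) ^ N`, so `e s ≥ exp s`, which forces `s = 1`
(`tsum_treeTerm`). It follows that `abelSum j = exp j` for natural `j`, and this is the claimed
expansion of `T ^ j`, up to shifting the index by `j`.
-/

open Finset Filter Topology

/-- The polynomial `x (x + n) ^ (n - 1) / n!` (equal to `1` for `n = 0`), the coefficient of `y ^ n`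
in `exp (x T(y))`, where `T(y) = ∑ m ^ (m - 1) y ^ m / m!` is the tree function. -/
noncomputable def abelCoeff : ℕ → ℝ → ℝ
  | 0, _ => 1
  | n + 1, x => x * (x + (n + 1)) ^ n / (n + 1).factorial

lemma hasDerivAt_abelCoeff_succ (n : ℕ) (x : ℝ) :
    HasDerivAt (abelCoeff (n + 1)) (abelCoeff n (x + 1)) x := by
  have h : HasDerivAt (fun y : ℝ => y * (y + (n + 1)) ^ n / (n + 1).factorial)
      ((1 * (x + (n + 1)) ^ n + x * (n * (x + (n + 1)) ^ (n - 1) * 1)) / (n + 1).factorial) x :=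
    ((hasDerivAt_id x).mul (((hasDerivAt_id x).add_const _).pow n)).div_const _
  have e : (1 * (x + (n + 1)) ^ n + x * (n * (x + (n + 1)) ^ (n - 1) * 1)) / (n + 1).factorial
      = abelCoeff n (x + 1) := by
    cases n with
    | zero => simp [abelCoeff]
    | succ n =>
      simp only [abelCoeff, Nat.add_sub_cancel]
      rw [Nat.factorial_succ (n + 1)]
      push_cast
      have : ((n + 1).factorial : ℝ) ≠ 0 := by positivity
      field_simp
      ring
  rw [← e]
  exact h

lemma abelCoeff_nonneg (n : ℕ) {x : ℝ} (hx : 0 ≤ x) : 0 ≤ abelCoeff n x := by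
  cases n <;> simp only [abelCoeff] <;> positivity

/-- Abel's binomial identity. Both sides agree at `x = 0`, and by induction they have the same
derivative in `x`, since `abelCoeff (n + 1)` has derivative `x ↦ abelCoeff n (x + 1)`. -/
lemma abelCoeff_add (n : ℕ) (x y : ℝ) :
    ∑ p ∈ antidiagonal n, abelCoeff p.1 x * abelCoeff p.2 y = abelCoeff n (x + y) := by
  induction n generalizing x with
  | zero => simp [abelCoeff]
  | succ n ih =>
    have h1 : ∀ z, HasDerivAt
        (fun z => ∑ p ∈ antidiagonal (n + 1), abelCoeff p.1 z * abelCoeff p.2 y)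
        (abelCoeff n (z + 1 + y)) z := by
      intro z
      rw [← ih (z + 1)]
      simp only [Nat.sum_antidiagonal_succ]
      refine HasDerivAt.const_add (c := abelCoeff 0 z * abelCoeff (n + 1) y) ?_
      exact HasDerivAt.fun_sum fun p _ => (hasDerivAt_abelCoeff_succ p.1 z).mul_const _
    have h2 : ∀ z, HasDerivAt (fun z => abelCoeff (n + 1) (z + y)) (abelCoeff n (z + 1 + y)) z := by
      intro z
      rw [add_right_comm]
      exact (hasDerivAt_abelCoeff_succ n (z + y)).comp_add_const z y
    have h3 : ∀ z, HasDerivAt (fun z =>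
        ∑ p ∈ antidiagonal (n + 1), abelCoeff p.1 z * abelCoeff p.2 y
          - abelCoeff (n + 1) (z + y)) 0 z := by
      intro z
      rw [← sub_self (abelCoeff n (z + 1 + y))]
      exact (h1 z).sub (h2 z)
    have h4 := is_const_of_deriv_eq_zero (fun z => (h3 z).differentiableAt)
      (fun z => (h3 z).deriv) x 0
    have h5 : ∑ p ∈ antidiagonal (n + 1), abelCoeff p.1 0 * abelCoeff p.2 y
        = abelCoeff (n + 1) y := by
      simp [Nat.sum_antidiagonal_succ, abelCoeff]
    simp only [h5, zero_add, sub_self] at h4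
    linarith

/-- The terms of the series of the tree function at `exp (-1)`. -/
noncomputable def treeTerm (n : ℕ) : ℝ :=
  ((n : ℝ) + 1) ^ n / (n + 1).factorial * Real.exp (-(n + 1 : ℕ))

lemma treeTerm_nonneg (n : ℕ) : 0 ≤ treeTerm n := by unfold treeTerm; positivity

/-- By Stirling's lower bound for the factorial, the terms are at most `(n + 1) ^ (-3 / 2)`. -/
lemma summable_treeTerm : Summable treeTerm := by
  have h : Summable fun n : ℕ => 1 / ((n + 1 : ℕ) : ℝ) ^ (3 / 2 : ℝ) :=
    (summable_nat_add_iff 1).2 (Real.summable_one_div_nat_rpow.2 (by norm_num : (1 : ℝ) < 3 / 2))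
  refine h.of_nonneg_of_le treeTerm_nonneg fun n => ?_
  have hs := Stirling.le_factorial_stirling (n + 1)
  have hn : (0 : ℝ) < (n + 1 : ℕ) := by positivity
  have h1 : √((n + 1 : ℕ) : ℝ) ≤ √(2 * Real.pi * (n + 1 : ℕ)) := by
    apply Real.sqrt_le_sqrt
    nlinarith [Real.pi_gt_three]
  have h2 : (((n + 1 : ℕ) : ℝ) / Real.exp 1) ^ (n + 1)
      = ((n + 1 : ℕ) : ℝ) ^ (n + 1) * Real.exp (-(n + 1 : ℕ)) := by
    rw [div_pow, ← Real.exp_nat_mul, mul_one, Real.exp_neg, div_eq_mul_inv]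
  rw [h2] at hs
  have h3 : ((n + 1 : ℕ) : ℝ) ^ (3 / 2 : ℝ) = (n + 1 : ℕ) * √((n + 1 : ℕ) : ℝ) := by
    rw [Real.sqrt_eq_rpow, show (3 / 2 : ℝ) = 1 + 1 / 2 by norm_num, Real.rpow_add hn,
      Real.rpow_one]
  rw [h3, le_div_iff₀ (by positivity)]
  unfold treeTerm
  rw [div_mul_eq_mul_div, div_mul_eq_mul_div, div_le_one (by positivity)]
  refine le_trans (le_of_eq ?_) ((mul_le_mul_of_nonneg_right h1 (by positivity)).trans hs)
  push_cast
  ring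

lemma abelCoeff_succ_le (n : ℕ) {x : ℝ} (hx : 0 ≤ x) :
    abelCoeff (n + 1) x * Real.exp (-(n + 1 : ℕ)) ≤ x * Real.exp x * treeTerm n := by
  have h1 : x + (n + 1) ≤ (n + 1) * Real.exp (x / (n + 1)) := by
    have := mul_le_mul_of_nonneg_left (Real.add_one_le_exp (x / (n + 1)))
      (by positivity : (0 : ℝ) ≤ n + 1)
    rwa [mul_add, mul_div_cancel₀ _ (by positivity), mul_one] at this
  have h2 : (x + (n + 1)) ^ n ≤ (n + 1) ^ n * Real.exp x := by
    refine (pow_le_pow_left₀ (by positivity) h1 n).trans ?_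
    rw [mul_pow, ← Real.exp_nat_mul]
    gcongr
    rw [mul_div_assoc', div_le_iff₀ (by positivity)]
    nlinarith
  simp only [treeTerm, abelCoeff]
  calc _ ≤ x * ((n + 1) ^ n * Real.exp x) / (n + 1).factorial * Real.exp (-(n + 1 : ℕ)) := by
        gcongr
    _ = _ := by ring

lemma le_abelCoeff_succ (n : ℕ) {x : ℝ} (hx : 0 ≤ x) :
    x * treeTerm n ≤ abelCoeff (n + 1) x * Real.exp (-(n + 1 : ℕ)) := by
  have h : (n : ℝ) + 1 ≤ x + (n + 1) := by linarith
  simp only [treeTerm, abelCoeff]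
  rw [← mul_assoc, mul_div_assoc']
  gcongr

lemma summable_abelCoeff {x : ℝ} (hx : 0 ≤ x) :
    Summable fun n : ℕ => abelCoeff n x * Real.exp (-n) := by
  rw [← summable_nat_add_iff 1]
  exact (summable_treeTerm.mul_left _).of_nonneg_of_le
    (fun n => mul_nonneg (abelCoeff_nonneg _ hx) (Real.exp_pos _).le)
    fun n => abelCoeff_succ_le n hx

/-- The sum of `exp (x T(y))`, expanded as a power series in `y`, at the boundary point
`y = exp (-1)`. -/
noncomputable def abelSum (x : ℝ) : ℝ := ∑' n : ℕ, abelCoeff n x * Real.exp (-n)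

lemma abelSum_zero : abelSum 0 = 1 := by
  unfold abelSum
  rw [(summable_abelCoeff le_rfl).tsum_eq_zero_add]
  simp [abelCoeff]

/-- Multiplicativity: the Cauchy product of the two series is evaluated by Abel's identity. -/
lemma abelSum_add {x y : ℝ} (hx : 0 ≤ x) (hy : 0 ≤ y) :
    abelSum (x + y) = abelSum x * abelSum y := by
  unfold abelSum
  rw [tsum_mul_tsum_eq_tsum_sum_antidiagonal_of_summable_norm (summable_abelCoeff hx).norm
    (summable_abelCoeff hy).norm]
  refine tsum_congr fun n => ?_
  rw [← abelCoeff_add, sum_mul]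
  refine sum_congr rfl fun p hp => ?_
  rw [← mem_antidiagonal.1 hp, Nat.cast_add, neg_add, Real.exp_add]
  ring

lemma abelSum_nat_mul (n : ℕ) {x : ℝ} (hx : 0 ≤ x) : abelSum (n * x) = abelSum x ^ n := by
  induction n with
  | zero => simp [abelSum_zero]
  | succ n ih =>
    rw [Nat.cast_succ, add_one_mul, abelSum_add (by positivity) hx, ih, pow_succ]

lemma le_abelSum {x : ℝ} (hx : 0 ≤ x) : 1 + x * ∑' n, treeTerm n ≤ abelSum x := by
  unfold abelSum
  have hs := summable_abelCoeff hx
  rw [hs.tsum_eq_zero_add, ← tsum_mul_left]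
  refine add_le_add (by simp [abelCoeff]) ?_
  exact (summable_treeTerm.mul_left x).tsum_le_tsum (fun n => le_abelCoeff_succ n hx)
    ((summable_nat_add_iff 1).2 hs)

lemma abelSum_one : abelSum 1 = Real.exp 1 * ∑' n, treeTerm n := by
  unfold abelSum
  rw [← tsum_mul_left]
  refine tsum_congr fun n => ?_
  unfold treeTerm
  rw [mul_left_comm, ← Real.exp_add]
  push_cast
  rw [show (1 : ℝ) + -(n + 1) = -n by ring]
  congr 1
  cases n with
  | zero => simp [abelCoeff]
  | succ n =>
    simp only [abelCoeff]
    rw [Nat.factorial_succ (n + 1)]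
    push_cast
    have : ((n + 1).factorial : ℝ) ≠ 0 := by positivity
    field_simp
    ring

/-- The sum `s` of the tree series at `exp (-1)` satisfies
`e s = abelSum 1 = abelSum (1 / N) ^ N ≥ (1 + s / N) ^ N → exp s`,
and `exp s ≤ e s` is only possible for `s = 1`. -/
lemma tsum_treeTerm : ∑' n, treeTerm n = 1 := by
  set s := ∑' n, treeTerm n with hs
  have hs0 : 0 ≤ s := tsum_nonneg treeTerm_nonneg
  have h : Real.exp s ≤ Real.exp 1 * s := by
    refine le_of_tendsto (Real.tendsto_one_add_div_pow_exp s) ?_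
    filter_upwards [eventually_gt_atTop 0] with N hN
    have hN' : (N : ℝ) ≠ 0 := by positivity
    have h0 : (0 : ℝ) ≤ 1 / N := by positivity
    rw [hs, ← abelSum_one]
    nth_rewrite 2 [← mul_one_div_cancel hN']
    rw [abelSum_nat_mul N h0]
    refine pow_le_pow_left₀ (by positivity) ?_ N
    have := le_abelSum h0
    rwa [one_div_mul_eq_div] at this
  by_contra hne
  have h1 := Real.add_one_lt_exp (sub_ne_zero.2 hne)
  rw [Real.exp_sub, sub_add_cancel, lt_div_iff₀ (Real.exp_pos 1)] at h1
  linarith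

lemma abelSum_nat (j : ℕ) : abelSum j = Real.exp j := by
  have := abelSum_nat_mul j zero_le_one
  rw [mul_one, abelSum_one, tsum_treeTerm, mul_one, ← Real.exp_nat_mul, mul_one] at this
  exact this

/-- The term `(n)_j n ^ (n - j - 1 - i) exp (-n) / n!`, where `(n)_j` is the falling factorial.
For `j ≥ 1` the term at `n = 0` vanishes, because of the falling factorial. -/
noncomputable def fallingTerm (i j n : ℕ) : ℝ :=
  n.descFactorial j * (n ^ n * Real.exp (-n) / n.factorial) / n ^ (j + 1 + i)

/-- For `j ≥ 1`, the expansion of `T ^ j` at the boundary, divided by `j`. -/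
lemma hasSum_fallingTerm_zero (j : ℕ) (hj : 1 ≤ j) :
    HasSum (fallingTerm 0 j) (1 / j) := by
  have hj0 : (0 : ℝ) < j := by exact_mod_cast hj
  have hlow : ∑ n ∈ range j, fallingTerm 0 j n = 0 := by
    refine sum_eq_zero fun n hn => ?_
    simp [fallingTerm, Nat.descFactorial_eq_zero_iff_lt.2 (mem_range.1 hn)]
  rw [← hasSum_nat_add_iff' j, hlow, sub_zero]
  have h := ((summable_abelCoeff hj0.le).hasSum).mul_left (Real.exp (-j) / j)
  have e : Real.exp (-j) / j * ∑' n : ℕ, abelCoeff n j * Real.exp (-n) = 1 / j := by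
    change Real.exp (-j) / j * abelSum j = 1 / j
    rw [abelSum_nat, div_mul_eq_mul_div, ← Real.exp_add]
    simp
  rw [e] at h
  refine h.congr_fun fun m => ?_
  have hd : ((m + j).factorial : ℝ) = m.factorial * (m + j).descFactorial j := by
    rw [← Nat.factorial_mul_descFactorial (Nat.le_add_left j m), Nat.add_sub_cancel, Nat.cast_mul]
  have hd0 : ((m + j).descFactorial j : ℝ) ≠ 0 := by
    exact_mod_cast (Nat.descFactorial_pos.2 (Nat.le_add_left j m)).ne'
  have he : Real.exp (-((m + j : ℕ) : ℝ)) = Real.exp (-j) * Real.exp (-m) := by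
    rw [← Real.exp_add]
    push_cast
    ring_nf
  simp only [fallingTerm]
  rw [hd, he]
  have hmj : (m : ℝ) + j ≠ 0 := by positivity
  cases m with
  | zero =>
    simp only [abelCoeff]
    push_cast at *
    simp only [zero_add] at *
    field_simp
    simp [pow_succ]
  | succ m =>
    simp only [abelCoeff]
    push_cast at *
    rw [add_comm (j : ℝ)]
    field_simp
    ring

/-- Induction on `i`, using `(n)_(j + 1) = (n - j) (n)_j`. -/
lemma exists_hasSum_fallingTerm (i j : ℕ) (hj : 1 ≤ j) :
    ∃ q : ℚ, HasSum (fallingTerm i j) q := by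
  induction i generalizing j with
  | zero => exact ⟨1 / j, by simpa using hasSum_fallingTerm_zero j hj⟩
  | succ i ih =>
    obtain ⟨a, ha⟩ := ih j hj
    obtain ⟨b, hb⟩ := ih (j + 1) (by omega)
    refine ⟨(a - b) / j, ?_⟩
    have hj0 : (j : ℝ) ≠ 0 := by positivity
    push_cast
    refine ((ha.sub hb).div_const (j : ℝ)).congr_fun fun n => ?_
    rcases Nat.eq_zero_or_pos n with rfl | hn
    · obtain ⟨j, rfl⟩ := Nat.exists_eq_add_of_le' hj
      simp [fallingTerm]
    · have hn0 : (n : ℝ) ≠ 0 := by positivity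
      have hd : ((n.descFactorial (j + 1) : ℕ) : ℝ) = (n - j) * n.descFactorial j := by
        rw [Nat.descFactorial_succ, Nat.cast_mul]
        rcases le_or_gt j n with h | h
        · rw [Nat.cast_sub h]
        · simp [Nat.descFactorial_eq_zero_iff_lt.2 h]
      unfold fallingTerm
      rw [hd]
      field_simp
      ring

/-- For every integer `k ≥ 1`, the sum `∑_{n=1}^∞ n^{n-k} e^{-n} / n!` is
a rational number. -/
theorem kolberg_boundary_rational (k : ℤ) (hk : 1 ≤ k) :
    ∃ q : ℚ,
      ∑' n : ℕ, ((n : ℝ) + 1) ^ ((n : ℤ) + 1 - k) * Real.exp (-((n : ℝ) + 1))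
          / (Nat.factorial (n + 1) : ℝ) = (q : ℝ) := by
  obtain ⟨i, rfl⟩ : ∃ i : ℕ, k = i + 1 := ⟨(k - 1).toNat, by omega⟩
  obtain ⟨q, hq⟩ := exists_hasSum_fallingTerm i 1 le_rfl
  refine ⟨q, ?_⟩
  rw [← hasSum_nat_add_iff' 1] at hq
  have h0 : ∑ n ∈ range 1, fallingTerm i 1 n = 0 := by simp [fallingTerm]
  rw [h0, sub_zero] at hq
  rw [← hq.tsum_eq]
  refine tsum_congr fun n => ?_
  have hn : (n : ℝ) + 1 ≠ 0 := by positivity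
  have hz : ((n : ℝ) + 1) ^ ((n : ℤ) + 1 - (i + 1)) = (n + 1) ^ (n + 1) / (n + 1) ^ (i + 1) := by
    rw [zpow_sub₀ hn]
    norm_cast
  rw [hz]
  simp only [fallingTerm, Nat.descFactorial_one]
  push_cast
  field_simp
  ring
end

section
/- If t is a nonzero complex number that is algebraic over ℚ, then the complex number t · exp(-t) is transcendental over ℚ. -/
/-!
The statement follows from the Hermite–Lindemann theorem (`hermite_lindemann`): if `t * exp (-t)`
were algebraic, then so would be `exp (-t)`, with `-t` nonzero and algebraic.

Suppose that `t ≠ 0` and `exp t` are both algebraic, let `K ⊆ ℂ` be the splitting field of the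
minimal polynomial of `t`, and let `E : ℤ[K] → ℂ` be the ring homomorphism on the group ring of
`(K, +)` which sends `[a]` to `exp a`. An integer polynomial vanishing at `exp t`, evaluated
at `[t]`, is a nonzero element of the kernel of `E`. Its norm, the product of its conjugates under
`Gal(K/ℚ)`, is still a nonzero element of the kernel, since `ℤ[K]` is a domain, and it is
Galois-invariant. Multiplying it by `∑ τ, [-τ b]`, for `b` in its support, keeps it invariant and
in the kernel, and makes its coefficient at `0` nonzero (`evalExp_ne_zero`).

This gives a relation `c₀ + ∑ a ∈ S, c a * exp a = 0` with `c₀ ≠ 0`, `0 ∉ S`, and Galois-invariant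
integers `c a`. Mathlib's `LindemannWeierstrass.exp_polynomial_approx` provides, for each large
prime `p`, an integer `n` prime to `p` and `g : ℤ[X]` such that `n * exp a - p * g(a)` is at most
`M ^ p / (p - 1)!` in absolute value for all `a ∈ S`. Hence `n * c₀ + p * ∑ a ∈ S, c a * g(a)` is
equally small. By invariance it is rational, and after clearing denominators it is an integer which
is not divisible by `p`, hence nonzero: a contradiction for large `p` (`add_sum_exp_ne_zero`).
-/

open Polynomial

theorem map_aeval_int {A B : Type*} [CommRing A] [CommRing B] (φ : A →+* B) (a : A) (g : ℤ[X]) :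
    φ (aeval a g) = aeval (φ a) g :=
  (aeval_algHom_apply φ.toIntAlgHom a g).symm

theorem isIntegral_mul_aeval {K : Type*} [Field K] {y : ℤ} {a : K}
    (ha : IsIntegral ℤ (y • a)) (g : ℤ[X]) {N : ℕ} (hN : g.natDegree ≤ N) :
    IsIntegral ℤ ((y : K) ^ N * aeval a g) := by
  rw [aeval_eq_sum_range' (Nat.lt_succ_of_le hN), Finset.mul_sum]
  refine IsIntegral.sum _ fun i hi => ?_
  have hi : i ≤ N := Nat.lt_succ_iff.mp (Finset.mem_range.mp hi)
  have : (y : K) ^ N * g.coeff i • a ^ i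
      = ((g.coeff i * y ^ (N - i) : ℤ) : K) * (y • a) ^ i := by
    obtain ⟨k, rfl⟩ := Nat.exists_eq_add_of_le hi
    simp only [zsmul_eq_mul, add_tsub_cancel_left]
    push_cast
    ring
  rw [this]
  exact (isIntegral_algebraMap (R := ℤ) (x := _)).mul (ha.pow i)

/-- The arithmetic core of the Hermite–Lindemann theorem. The hypothesis `hrat` is what
Galois-invariance of the coefficients `c` on the Galois-stable set `S` is used for. -/
theorem add_sum_exp_ne_zero {K : Type*} [Field K] [Algebra ℚ K] [FiniteDimensional ℚ K]
    (φ : K →+* ℂ) (S : Finset K) (hS : 0 ∉ S) (c : K → ℤ) (c₀ : ℤ) (hc₀ : c₀ ≠ 0)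
    (hrat : ∀ g : ℤ[X], ∑ a ∈ S, c a * aeval a g ∈ Set.range (algebraMap ℚ K)) :
    c₀ + ∑ a ∈ S, c a * Complex.exp (φ a) ≠ 0 := by
  intro hzero
  obtain ⟨y, hy0, hy⟩ := exists_integral_multiples ℤ ℚ S
  -- `f` is an integer polynomial with `f(0) ≠ 0` vanishing on `S`: a product of annihilators
  have hq (a : K) : ∃ q : ℤ[X], q.coeff 0 ≠ 0 ∧ (a ∈ S → aeval a q = 0) := by
    by_cases ha : a ∈ S
    · have hane : a ≠ 0 := fun h => hS (h ▸ ha)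
      obtain ⟨q, hq0, hq⟩ := ((IsFractionRing.isAlgebraic_iff ℤ ℚ K).mpr
        (Algebra.IsAlgebraic.isAlgebraic a)).exists_nonzero_coeff_and_aeval_eq_zero
        (mem_nonZeroDivisors_of_ne_zero hane)
      exact ⟨q, hq0, fun _ => hq⟩
    · exact ⟨1, by simp, fun h => absurd h ha⟩
  choose q hq0 hq using hq
  set f : ℤ[X] := ∏ a ∈ S, q a with hf
  have hf0 : f.eval 0 ≠ 0 := by
    rw [hf, eval_prod]
    exact Finset.prod_ne_zero_iff.mpr fun a _ => by
      rw [← coeff_zero_eq_eval_zero]; exact hq0 a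
  have hroot : ∀ a ∈ S, φ a ∈ f.aroots ℂ := by
    intro a ha
    rw [mem_aroots]
    refine ⟨fun h => hf0 (by simp [h]), ?_⟩
    have : aeval a f = 0 := by
      rw [hf, map_prod]
      exact Finset.prod_eq_zero ha (hq a ha)
    rw [← map_aeval_int, this, map_zero]
  obtain ⟨M, hM⟩ := LindemannWeierstrass.exp_polynomial_approx f hf0
  set d := f.natDegree
  set C : ℝ := ∑ a ∈ S, |(c a : ℝ)|
  set B : ℝ := |(y : ℝ)| ^ d * M with hB
  -- `C * B ^ p / (p - 1)!` is the final upper bound for a nonzero integer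
  have hlim : Filter.Tendsto (fun k : ℕ => C * B * (B ^ k / (k.factorial : ℝ)))
      Filter.atTop (nhds 0) := by
    simpa using (FloorSemiring.tendsto_pow_div_factorial_atTop B).const_mul (C * B)
  obtain ⟨k₀, hk₀⟩ := Filter.eventually_atTop.mp (hlim.eventually_lt_const one_pos)
  obtain ⟨p, hpge, hp⟩ := Nat.exists_infinite_primes
    ((eval 0 f).natAbs + y.natAbs + c₀.natAbs + k₀ + 1)
  obtain ⟨n, hn, g, hg, happ⟩ := hM p (by omega) hp
  have hpint : Prime (p : ℤ) := Nat.prime_iff_prime_int.mp hp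
  -- the rational sum of `hrat`, cleared of denominators, is a rational integer
  obtain ⟨m, hm⟩ : ∃ m : ℤ, (m : K) = (y : K) ^ (p * d) * ∑ a ∈ S, c a * aeval a g := by
    obtain ⟨r, hr⟩ := hrat g
    have hint : IsIntegral ℤ ((y : K) ^ (p * d) * ∑ a ∈ S, c a * aeval a g) := by
      rw [Finset.mul_sum]
      refine IsIntegral.sum _ fun a ha => ?_
      rw [mul_left_comm]
      exact (isIntegral_algebraMap (R := ℤ) (x := c a)).mul
        (isIntegral_mul_aeval (hy a ha) g (hg.trans (Nat.sub_le _ _)))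
    rw [← hr] at hint ⊢
    have he : (y : K) ^ (p * d) * algebraMap ℚ K r = algebraMap ℚ K ((y : ℚ) ^ (p * d) * r) := by
      rw [map_mul, map_pow, map_intCast]
    rw [he] at hint ⊢
    rw [isIntegral_algebraMap_iff (algebraMap ℚ K).injective] at hint
    obtain ⟨m, hm⟩ := IsIntegrallyClosed.isIntegral_iff.mp hint
    exact ⟨m, by rw [← hm]; simp⟩
  -- `p` divides none of `y`, `n`, `c₀`
  have hne : y ^ (p * d) * n * c₀ + p * m ≠ 0 := by
    intro h
    have hdvd : (p : ℤ) ∣ y ^ (p * d) * n * c₀ :=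
      (dvd_add_left (dvd_mul_right _ _)).mp (h ▸ dvd_zero _)
    have small : ∀ z : ℤ, z ≠ 0 → z.natAbs < p → ¬ (p : ℤ) ∣ z := fun z hz hlt hd =>
      absurd (Nat.le_of_dvd (Int.natAbs_pos.mpr hz) (Int.natCast_dvd.mp hd)) (by omega)
    rcases hpint.dvd_or_dvd hdvd with h | h
    · rcases hpint.dvd_or_dvd h with h | h
      · exact small y hy0 (by omega) (hpint.dvd_of_dvd_pow h)
      · exact hn h
    · exact small c₀ hc₀ (by omega) h
  have hone : (1 : ℝ) ≤ ‖((y ^ (p * d) * n * c₀ + p * m : ℤ) : ℂ)‖ := by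
    rw [Complex.norm_intCast]
    exact_mod_cast Int.one_le_abs hne
  have hmC : (m : ℂ) = (y : ℂ) ^ (p * d) * ∑ a ∈ S, c a * aeval (φ a) g := by
    have := congrArg φ hm
    simp only [map_intCast, map_mul, map_pow, map_sum] at this
    rw [this]
    congr 1
    exact Finset.sum_congr rfl fun a _ => by rw [map_aeval_int]
  -- the relation `hzero` turns the integer into a combination of the approximation errors
  have hkey : ((y ^ (p * d) * n * c₀ + p * m : ℤ) : ℂ)
      = -((y : ℂ) ^ (p * d) *
        ∑ a ∈ S, c a * (n • Complex.exp (φ a) - p • aeval (φ a) g)) := by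
    have hc : (c₀ : ℂ) = -∑ a ∈ S, c a * Complex.exp (φ a) := eq_neg_of_add_eq_zero_left hzero
    push_cast
    rw [hmC, hc]
    simp only [zsmul_eq_mul, nsmul_eq_mul, mul_sub, Finset.sum_sub_distrib, mul_left_comm (c _ : ℂ),
      ← Finset.mul_sum]
    ring
  have hbound : ‖((y ^ (p * d) * n * c₀ + p * m : ℤ) : ℂ)‖
      ≤ |(y : ℝ)| ^ (p * d) * (C * (M ^ p / (p - 1).factorial)) := by
    rw [hkey, norm_neg, norm_mul, norm_pow, Complex.norm_intCast, Finset.sum_mul]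
    gcongr
    refine (norm_sum_le _ _).trans (Finset.sum_le_sum fun a ha => ?_)
    rw [norm_mul, Complex.norm_intCast]
    gcongr
    exact happ (hroot a ha)
  have heq : |(y : ℝ)| ^ (p * d) * (C * (M ^ p / (p - 1).factorial))
      = C * B * (B ^ (p - 1) / (p - 1).factorial) := by
    obtain ⟨k, rfl⟩ := Nat.exists_eq_add_of_le hp.one_le
    simp only [add_tsub_cancel_left, hB, mul_pow, ← pow_mul]
    ring
  have := hk₀ (p - 1) (by omega)
  linarith

/-- The ring homomorphism `ℤ[K] → ℂ` on the group ring of `(K, +)` sending the basis element `[a]`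
to `exp (φ a)`, where `φ` is an embedding of `K` into `ℂ`. -/
noncomputable def evalExp {K : Type*} [Field K] (φ : K →+* ℂ) : AddMonoidAlgebra ℤ K →ₐ[ℤ] ℂ :=
  AddMonoidAlgebra.lift ℤ ℂ K
    { toFun := fun a => Complex.exp (φ a.toAdd)
      map_one' := by simp
      map_mul' := fun a b => by simp [Complex.exp_add] }

theorem evalExp_single {K : Type*} [Field K] (φ : K →+* ℂ) (a : K) :
    evalExp φ (AddMonoidAlgebra.single a 1) = Complex.exp (φ a) := by
  simp [evalExp]

theorem evalExp_ne_zero_of_invariant {K : Type*} [Field K] [Algebra ℚ K] [FiniteDimensional ℚ K]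
    [IsGalois ℚ K] (φ : K →+* ℂ) (F : AddMonoidAlgebra ℤ K) (h0 : F.coeff 0 ≠ 0)
    (hF : ∀ (σ : Gal(K/ℚ)) (a : K), F.coeff (σ a) = F.coeff a) :
    evalExp φ F ≠ 0 := by
  classical
  have h := add_sum_exp_ne_zero φ (F.coeff.support.erase 0) (by simp) F.coeff (F.coeff 0) h0 ?_
  · intro hz
    apply h
    rw [← hz, evalExp, AddMonoidAlgebra.lift_apply, Finsupp.sum,
      ← Finset.add_sum_erase _ _ (Finsupp.mem_support_iff.mpr h0)]
    simp
  · intro g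
    rw [IsGalois.mem_range_algebraMap_iff_fixed]
    intro σ
    rw [map_sum]
    refine Finset.sum_equiv σ.toEquiv (fun a => ?_) (fun a _ => ?_)
    · simp [hF]
    · simp only [map_mul, map_intCast]
      change _ = ((F.coeff (σ a) : ℤ) : K) * aeval (σ a) g
      rw [hF]
      congr 1
      exact map_aeval_int (σ : K →+* K) a g

/-- Linear independence of exponentials of distinct elements of `K`, over `ℤ`: the general case is
reduced to a Galois-invariant element with nonzero coefficient at `0`. -/
theorem evalExp_ne_zero {K : Type*} [Field K] [Algebra ℚ K] [FiniteDimensional ℚ K]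
    [IsGalois ℚ K] (φ : K →+* ℂ) (F : AddMonoidAlgebra ℤ K) (hF : F ≠ 0) :
    evalExp φ F ≠ 0 := by
  classical
  intro hz
  have : CharZero K := algebraRat.charZero K
  let act (σ : Gal(K/ℚ)) : AddMonoidAlgebra ℤ K ≃ₐ[ℤ] AddMonoidAlgebra ℤ K :=
    AddMonoidAlgebra.domCongr ℤ ℤ (σ : K ≃+ K)
  have act_coeff (σ : Gal(K/ℚ)) (H : AddMonoidAlgebra ℤ K) (a : K) :
      (act σ H).coeff (σ a) = H.coeff a := by
    simp only [act, AddMonoidAlgebra.coeff_domCongr]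
    exact congrArg H.coeff (σ.symm_apply_apply a)
  have act_mul (σ τ : Gal(K/ℚ)) (H : AddMonoidAlgebra ℤ K) : act σ (act τ H) = act (σ * τ) H := by
    ext a
    obtain ⟨b, rfl⟩ := (σ * τ).surjective a
    rw [act_coeff]
    simp only [AlgEquiv.mul_apply]
    rw [act_coeff, act_coeff]
  -- the norm of `F`
  let N : AddMonoidAlgebra ℤ K := ∏ σ : Gal(K/ℚ), act σ F
  have hN0 : N ≠ 0 := Finset.prod_ne_zero_iff.mpr fun σ _ => by simpa using hF
  have hNinv (σ : Gal(K/ℚ)) : act σ N = N := by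
    simp only [N, map_prod, act_mul]
    exact Fintype.prod_equiv (Equiv.mulLeft σ) _ _ fun τ => rfl
  have hNc (σ : Gal(K/ℚ)) (a : K) : N.coeff (σ a) = N.coeff a := by
    conv_lhs => rw [← hNinv σ]
    exact act_coeff σ N a
  have hNz : evalExp φ N = 0 := by
    rw [map_prod]
    refine Finset.prod_eq_zero (Finset.mem_univ 1) ?_
    have : act 1 F = F := by
      ext a; exact act_coeff 1 F a
    rw [this, hz]
  obtain ⟨b, hb⟩ : ∃ b, N.coeff b ≠ 0 := by
    by_contra! h
    exact hN0 (by ext a; simpa using h a)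
  -- the coefficient of `N * T` at `0` is `∑ τ, N.coeff (τ b) = |Gal(K/ℚ)| * N.coeff b`
  let T : AddMonoidAlgebra ℤ K := ∑ τ : Gal(K/ℚ), AddMonoidAlgebra.single (-(τ b)) 1
  have hcoeff (a : K) : (N * T).coeff a = ∑ τ : Gal(K/ℚ), N.coeff (a + τ b) := by
    simp only [T, Finset.mul_sum, AddMonoidAlgebra.coeff_sum, Finsupp.finsetSum_apply]
    refine Finset.sum_congr rfl fun τ _ => ?_
    rw [AddMonoidAlgebra.coeff_mul_single_eq_coeff_mul (a + τ b), mul_one]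
    intro x _
    rw [← sub_eq_add_neg, sub_eq_iff_eq_add]
  refine evalExp_ne_zero_of_invariant φ (N * T) ?_ ?_ (by rw [map_mul, hNz, zero_mul])
  · rw [hcoeff]
    simp only [zero_add, hNc, Finset.sum_const, smul_ne_zero_iff]
    exact ⟨by simp, hb⟩
  · intro σ a
    rw [hcoeff, hcoeff]
    refine Fintype.sum_equiv (Equiv.mulLeft σ⁻¹) _ _ fun τ => ?_
    rw [← hNc σ (a + _)]
    simp

/-- The Hermite–Lindemann theorem. -/
theorem hermite_lindemann {t : ℂ} (ht : t ≠ 0) (halg : IsAlgebraic ℚ t) :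
    Transcendental ℚ (Complex.exp t) := by
  intro hexp
  obtain ⟨q, hq0, hq⟩ := ((IsFractionRing.isAlgebraic_iff ℤ ℚ ℂ).mpr
    hexp).exists_nonzero_coeff_and_aeval_eq_zero
    (mem_nonZeroDivisors_of_ne_zero (Complex.exp_ne_zero t))
  let K := IntermediateField.adjoin ℚ ((minpoly ℚ t).rootSet ℂ)
  have : IsSplittingField ℚ K (minpoly ℚ t) :=
    IntermediateField.adjoin_rootSet_isSplittingField (IsAlgClosed.splits _)
  have : FiniteDimensional ℚ K := IsSplittingField.finiteDimensional K (minpoly ℚ t)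
  have : IsGalois ℚ K :=
    IsGalois.of_separable_splitting_field (minpoly.irreducible halg.isIntegral).separable
  have htK : t ∈ K := IntermediateField.subset_adjoin _ _ <| by
    rw [mem_rootSet]
    exact ⟨minpoly.ne_zero halg.isIntegral, minpoly.aeval ℚ t⟩
  let s : K := ⟨t, htK⟩
  have hs : s ≠ 0 := fun h => ht (congrArg Subtype.val h)
  refine evalExp_ne_zero (algebraMap K ℂ) (aeval (AddMonoidAlgebra.single s (1 : ℤ)) q) ?_ ?_
  · intro h
    -- as `s ≠ 0`, the multiples `i • s` with `i > 0` are nonzero,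
    -- so the coefficient at `0 : K` is `q.coeff 0`
    apply hq0
    have := congrArg (fun H => H.coeff 0) h
    simpa [aeval_eq_sum_range, AddMonoidAlgebra.single_pow, Finsupp.single_apply, hs] using this
  · rw [← aeval_algHom_apply, evalExp_single]
    exact hq

/-- A consequence of Lindemann's theorem: if `t` is a nonzero algebraic complex
number, then `t · exp(-t)` is transcendental. -/
theorem transcendental_mul_exp_neg (t : ℂ) (ht : t ≠ 0) (halg : IsAlgebraic ℚ t) :
    Transcendental ℚ (t * Complex.exp (-t)) := by
  intro h
  refine hermite_lindemann (neg_ne_zero.mpr ht) halg.neg ?_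
  have := halg.inv.mul h
  rwa [inv_mul_cancel_left₀ ht] at this
end
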